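/- Let f ∈ C_b^4(ℝ^d) be a bounded probability density and let K be a kernel on ℝ^d satisfying (K0)–(K2) with μ₄ > μ₂₂ > 0, and η := μ₄ + (d−1)μ₂₂ − d > 0. Define the polynomials p₀(z) := 1 − η^{−1}(‖z‖² − d), p_j(z) := z_j, and p_{jk}(z) := μ₂₂^{−1} z_j z_k for j ≠ k, p_{jj}(z) := 2(μ₄ − μ₂₂)^{−1}( z_j² − 1 − (μ₂₂ − 1) η^{−1}(‖z‖² − d) ). Fix x_o ∈ ℝ^d. Then for all sequences h_n → 0+ and x_n → x_o: (i) ∫ K(z) p₀(z) f(x_n + h_n z) dz = f(x_n) + h_n⁴ β(x_o) + o(h_n⁴), where β(x_o) := (1/24) ∫ K(z) p₀(z) D⁴f(x_o; z) dz; (ii) for each j, ∫ K(z) z_j f(x_n + h_n z) dz = h_n f^{(e_j)}(x_n) + h_n³ β_j(x_o) + o(h_n³), where β_j(x_o) := (1/6) ∫ K(z) z_j D³f(x_o; z) dz; (iii) for each j,k, ∫ K(z) p_{jk}(z) f(x_n + h_n z) dz = h_n² f^{(e_j + e_k)}(x_n) + h_n⁴ B_{jk}(x_o) + o(h_n⁴),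 where B_{jk}(x_o) := (1/24) ∫ K(z) p_{jk}(z) D⁴f(x_o; z) dz. -/

import Mathlib

open MeasureTheory Filter Topology

noncomputable section

/-- `ℝ^d` as a pi type; `volume` is `d`-dimensional Lebesgue measure. -/
abbrev Vec (d : ℕ) := Fin d → ℝ

/-- The Euclidean norm on `ℝ^d`. -/
def euclNorm {d : ℕ} (z : Vec d) : ℝ := Real.sqrt (∑ i, z i ^ 2)

/-- The `k`-th directional derivative `D^k g(x; z)`. -/
noncomputable def dirDeriv {d : ℕ} (k : ℕ) (g : Vec d → ℝ) (x z : Vec d) : ℝ :=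
  iteratedFDeriv ℝ k g x fun _ => z

/-- Polynomial growth. -/
def PG {d : ℕ} (P : Vec d → ℝ) : Prop :=
  Measurable P ∧ ∃ C : ℝ, ∃ N : ℕ, 0 ≤ C ∧ ∀ z, |P z| ≤ C * (1 + ‖z‖) ^ N

theorem PG.const {d : ℕ} (c : ℝ) : PG (fun _ : Vec d => c) :=
  ⟨measurable_const, |c|, 0, abs_nonneg _, fun z => by simp⟩

theorem PG.coord {d : ℕ} (i : Fin d) : PG (fun z : Vec d => z i) := by
  refine ⟨measurable_pi_apply i, 1, 1, zero_le_one, fun z => ?_⟩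
  have := norm_le_pi_norm z i
  rw [Real.norm_eq_abs] at this
  linarith [pow_one (1 + ‖z‖)]

theorem PG.mul {d : ℕ} {P Q : Vec d → ℝ} (hP : PG P) (hQ : PG Q) : PG (fun z => P z * Q z) := by
  obtain ⟨hm, C, N, hC, h⟩ := hP
  obtain ⟨hm', C', N', hC', h'⟩ := hQ
  refine ⟨hm.mul hm', C * C', N + N', mul_nonneg hC hC', fun z => ?_⟩
  rw [abs_mul]
  calc |P z| * |Q z| ≤ (C * (1 + ‖z‖) ^ N) * (C' * (1 + ‖z‖) ^ N') :=
        mul_le_mul (h z) (h' z) (abs_nonneg _) (by positivity)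
    _ = _ := by ring

theorem PG.add {d : ℕ} {P Q : Vec d → ℝ} (hP : PG P) (hQ : PG Q) : PG (fun z => P z + Q z) := by
  obtain ⟨hm, C, N, hC, h⟩ := hP
  obtain ⟨hm', C', N', hC', h'⟩ := hQ
  refine ⟨hm.add hm', C + C', N + N', add_nonneg hC hC', fun z => ?_⟩
  have h1 : (1 : ℝ) ≤ 1 + ‖z‖ := by linarith [norm_nonneg z]
  calc |P z + Q z| ≤ |P z| + |Q z| := abs_add_le _ _
    _ ≤ C * (1 + ‖z‖) ^ N + C' * (1 + ‖z‖) ^ N' := add_le_add (h z) (h' z)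
    _ ≤ C * (1 + ‖z‖) ^ (N + N') + C' * (1 + ‖z‖) ^ (N + N') := by
        gcongr <;> first | exact h1 | omega
    _ = _ := by ring

theorem PG.sub {d : ℕ} {P Q : Vec d → ℝ} (hP : PG P) (hQ : PG Q) : PG (fun z => P z - Q z) := by
  have := hP.add ((PG.const (-1)).mul hQ)
  convert this using 2
  ring

theorem PG.sum {d : ℕ} {ι : Type*} (s : Finset ι) {P : ι → Vec d → ℝ} (hP : ∀ i, PG (P i)) :
    PG (fun z => ∑ i ∈ s, P i z) := by
  classical
  induction s using Finset.induction_on with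
  | empty => simpa using PG.const 0
  | insert a s ha ih =>
    simp_rw [Finset.sum_insert ha]
    exact (hP a).add ih

theorem euclNorm_sq {d : ℕ} (z : Vec d) : euclNorm z ^ 2 = ∑ i, z i ^ 2 :=
  Real.sq_sqrt (Finset.sum_nonneg fun i _ => sq_nonneg _)

theorem euclNorm_nonneg' {d : ℕ} (z : Vec d) : 0 ≤ euclNorm z := Real.sqrt_nonneg _

theorem norm_le_euclNorm {d : ℕ} (z : Vec d) : ‖z‖ ≤ euclNorm z := by
  rw [pi_norm_le_iff_of_nonneg (euclNorm_nonneg' z)]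
  intro i
  rw [Real.norm_eq_abs]
  apply Real.abs_le_sqrt
  exact Finset.single_le_sum (f := fun i => z i ^ 2) (fun i _ => sq_nonneg _) (Finset.mem_univ i)

theorem PG.esq {d : ℕ} : PG (fun z : Vec d => euclNorm z ^ 2) := by
  simp_rw [euclNorm_sq, pow_two]
  exact PG.sum _ fun i => (PG.coord i).mul (PG.coord i)

theorem PG.dir {d : ℕ} (k : ℕ) (f : Vec d → ℝ) (x : Vec d) : PG (fun z => dirDeriv k f x z) := by
  refine ⟨?_, ‖iteratedFDeriv ℝ k f x‖, k, norm_nonneg _, fun z => ?_⟩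
  · apply Continuous.measurable
    unfold dirDeriv
    fun_prop
  · unfold dirDeriv
    rw [← Real.norm_eq_abs]
    refine (ContinuousMultilinearMap.le_opNorm _ _).trans ?_
    simp only [Finset.prod_const, Finset.card_univ, Fintype.card_fin]
    gcongr
    linarith

theorem PG.integrable {d : ℕ} {K : Vec d → ℝ} (hKmeas : Measurable K) (hKpos : ∀ z, 0 ≤ K z)
    (hK : Integrable K)
    (hKmom : ∀ r : ℝ, 0 < r → Integrable (fun z => K z * euclNorm z ^ r))
    {P : Vec d → ℝ} (hP : PG P) : Integrable (fun z => K z * P z) := by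
  obtain ⟨hm, C, N, hC, h⟩ := hP
  have h1 := hKmom (N + 1 : ℕ) (by positivity)
  simp_rw [Real.rpow_natCast] at h1
  refine ((hK.add h1).const_mul (C * 2 ^ N)).mono' (hKmeas.mul hm).aestronglyMeasurable
    (ae_of_all _ fun z => ?_)
  rw [Real.norm_eq_abs, abs_mul, abs_of_nonneg (hKpos z)]
  have h2 : (1 + ‖z‖) ^ N ≤ 2 ^ N * (1 + euclNorm z ^ (N + 1)) := by
    have h3 : (1 : ℝ) ≤ 1 + ‖z‖ := by linarith [norm_nonneg z]
    calc (1 + ‖z‖) ^ N ≤ (1 + ‖z‖) ^ (N + 1) := pow_le_pow_right₀ h3 (by omega)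
      _ ≤ (1 + euclNorm z) ^ (N + 1) := by gcongr; exact norm_le_euclNorm z
      _ ≤ 2 ^ (N + 1 - 1) * (1 ^ (N + 1) + euclNorm z ^ (N + 1)) :=
        add_pow_le zero_le_one (euclNorm_nonneg' z) _
      _ = _ := by simp
  calc K z * |P z| ≤ K z * (C * (2 ^ N * (1 + euclNorm z ^ (N + 1)))) :=
        mul_le_mul_of_nonneg_left ((h z).trans (mul_le_mul_of_nonneg_left h2 hC)) (hKpos z)
    _ = _ := by simp only [Pi.add_apply]; ring

theorem iteratedDeriv_line {d : ℕ} {m : ℕ} {f : Vec d → ℝ} (hf : ContDiff ℝ m f) (x v : Vec d)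
    (k : ℕ) (hk : k ≤ m) (t : ℝ) :
    iteratedDeriv k (fun t : ℝ => f (x + t • v)) t = dirDeriv k f (x + t • v) v := by
  have h1 : (fun t : ℝ => f (x + t • v)) =
      (fun y => f (x + y)) ∘ (ContinuousLinearMap.toSpanSingleton ℝ v) := by
    ext t; simp
  rw [iteratedDeriv_eq_iteratedFDeriv, h1, ContinuousLinearMap.iteratedFDeriv_comp_right _
    (n := m) (by fun_prop) _ (by exact_mod_cast hk)]
  simp [dirDeriv, iteratedFDeriv_comp_add_left]

theorem dirDeriv_smul {d : ℕ} (k : ℕ) (f : Vec d → ℝ) (x z : Vec d) (c : ℝ) :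
    dirDeriv k f x (c • z) = c ^ k * dirDeriv k f x z := by
  unfold dirDeriv
  rw [ContinuousMultilinearMap.map_smul_univ]
  simp

theorem taylor_lagrange {d : ℕ} {m : ℕ} {f : Vec d → ℝ} (hf : ContDiff ℝ (m + 1 : ℕ) f)
    (x v : Vec d) : ∃ t ∈ Set.Ioo (0 : ℝ) 1,
    f (x + v) - ∑ k ∈ Finset.range (m + 1), (k.factorial : ℝ)⁻¹ * dirDeriv k f x v =
      dirDeriv (m + 1) f (x + t • v) v / ((m + 1).factorial : ℝ) := by
  have hφ : ContDiff ℝ (m + 1 : ℕ) (fun t : ℝ => f (x + t • v)) := by fun_prop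
  obtain ⟨t, ht, h⟩ := taylor_mean_remainder_lagrange_iteratedDeriv (n := m) (x₀ := 0) (x := 1)
    zero_ne_one hφ.contDiffOn
  rw [Set.uIoo_of_le zero_le_one] at ht
  refine ⟨t, ht, ?_⟩
  rw [taylor_within_apply, iteratedDeriv_line hf x v _ le_rfl] at h
  simp only [sub_zero, one_pow, mul_one, one_smul, smul_eq_mul] at h
  rw [← h]
  congr 1
  refine Finset.sum_congr rfl fun k hk => ?_
  have hk' : k ≤ m + 1 := (Finset.mem_range.1 hk).le
  rw [Set.uIcc_of_le zero_le_one, iteratedDerivWithin_eq_iteratedDeriv (uniqueDiffOn_Icc zero_lt_one)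
    ((hφ.of_le (by exact_mod_cast hk')).contDiffAt) (by simp), iteratedDeriv_line hf x v k hk']
  simp

theorem taylor_lim {d : ℕ} {m : ℕ} {f : Vec d → ℝ} (hf : ContDiff ℝ (m + 1 : ℕ) f)
    (hfb : ∃ C : ℝ, ∀ x : Vec d, ‖iteratedFDeriv ℝ (m + 1) f x‖ ≤ C)
    (hf0 : ∃ C : ℝ, ∀ x : Vec d, |f x| ≤ C)
    {K : Vec d → ℝ} (hKmeas : Measurable K)
    (hI : ∀ P : Vec d → ℝ, PG P → Integrable (fun z => K z * P z))
    {P : Vec d → ℝ} (hP : PG P)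
    (x_o : Vec d) (h : ℕ → ℝ) (hh : ∀ n, 0 < h n) (hh0 : Tendsto h atTop (𝓝 0))
    (x : ℕ → Vec d) (hx : Tendsto x atTop (𝓝 x_o)) :
    Tendsto (fun n => ((∫ z : Vec d, K z * P z * f (x n + h n • z)) -
        ∑ k ∈ Finset.range (m + 1), (k.factorial : ℝ)⁻¹ * h n ^ k *
          ∫ z : Vec d, K z * P z * dirDeriv k f (x n) z) / h n ^ (m + 1)) atTop
      (𝓝 ((1 / ((m + 1).factorial : ℝ)) * ∫ z : Vec d, K z * P z * dirDeriv (m + 1) f x_o z)) := by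
  obtain ⟨C, hC⟩ := hfb
  obtain ⟨C0, hC0⟩ := hf0
  have hC' : 0 ≤ C := (norm_nonneg _).trans (hC 0)
  have hC0' : 0 ≤ C0 := (abs_nonneg _).trans (hC0 0)
  have hfc : Continuous f := hf.continuous
  choose t ht htt using fun n (z : Vec d) => taylor_lagrange hf (x n) (h n • z)
  set R : ℕ → Vec d → ℝ := fun n z => (f (x n + h n • z) -
    ∑ k ∈ Finset.range (m + 1), (k.factorial : ℝ)⁻¹ * h n ^ k * dirDeriv k f (x n) z) / h n ^ (m + 1)
    with hR
  have hRe : ∀ n z, R n z = dirDeriv (m + 1) f (x n + t n z • h n • z) z / ((m + 1).factorial : ℝ) := by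
    intro n z
    have h1 := htt n z
    have h2 := (pow_pos (hh n) (m + 1)).ne'
    simp only [dirDeriv_smul] at h1
    simp only [hR]
    rw [div_eq_iff h2]
    simp only [mul_assoc]
    rw [h1]
    ring
  have hPGf : ∀ n, PG (fun z => f (x n + h n • z)) := fun n =>
    ⟨by fun_prop, C0, 0, hC0', fun z => by simpa using hC0 _⟩
  have hint : ∀ {Q : Vec d → ℝ}, PG Q → Integrable (fun z => K z * P z * Q z) := by
    intro Q hQ
    simpa only [mul_assoc] using hI _ (hP.mul hQ)
  have hstep : ∀ n, ((∫ z : Vec d, K z * P z * f (x n + h n • z)) -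
        ∑ k ∈ Finset.range (m + 1), (k.factorial : ℝ)⁻¹ * h n ^ k *
          ∫ z : Vec d, K z * P z * dirDeriv k f (x n) z) / h n ^ (m + 1) =
      ∫ z, K z * P z * R n z := by
    intro n
    simp_rw [← integral_const_mul]
    rw [← integral_finsetSum _ (fun k _ => (hint (PG.dir k f (x n))).const_mul _),
      ← integral_sub (hint (hPGf n))
        (integrable_finsetSum _ (fun k _ => (hint (PG.dir k f (x n))).const_mul _)),
      ← integral_div]
    congr 1
    ext z
    simp only [hR]
    rw [mul_div_assoc', mul_sub, Finset.mul_sum]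
    congr 3
    ext k
    ring
  simp_rw [hstep]
  rw [← integral_const_mul]
  have hRb : ∀ n z, |R n z| ≤ C * (1 + ‖z‖) ^ (m + 1) := by
    intro n z
    rw [hRe, abs_div, Nat.abs_cast]
    have h1 : (1 : ℝ) ≤ ((m + 1).factorial : ℝ) := by exact_mod_cast Nat.one_le_iff_ne_zero.2 (Nat.factorial_ne_zero _)
    refine (div_le_self (abs_nonneg _) h1).trans ?_
    unfold dirDeriv
    rw [← Real.norm_eq_abs]
    refine (ContinuousMultilinearMap.le_opNorm _ _).trans ?_
    simp only [Finset.prod_const, Finset.card_univ, Fintype.card_fin]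
    gcongr
    · exact hC _
    · linarith
  have hRm : ∀ n, Measurable (R n) := by
    intro n
    simp only [hR]
    refine Measurable.div_const (Measurable.sub (by fun_prop) ?_) _
    exact Finset.measurable_fun_sum _ fun k _ => (PG.dir k f (x n)).1.const_mul _
  have hbd : PG (fun z : Vec d => C * (1 + ‖z‖) ^ (m + 1)) :=
    ⟨by fun_prop, C, m + 1, hC', fun z => by rw [abs_of_nonneg (by positivity)]⟩
  refine tendsto_integral_of_dominated_convergence
    (fun z => ‖K z * P z * (C * (1 + ‖z‖) ^ (m + 1))‖)
    (fun n => ((hKmeas.mul hP.1).mul (hRm n)).aestronglyMeasurable) (hint hbd).norm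
    (fun n => ae_of_all _ fun z => ?_) (ae_of_all _ fun z => ?_)
  · rw [norm_mul, norm_mul (K z * P z)]
    gcongr
    rw [Real.norm_eq_abs, Real.norm_eq_abs]
    exact (hRb n z).trans (le_abs_self _)
  · have hcont : Continuous (fun y => dirDeriv (m + 1) f y z) := by
      unfold dirDeriv
      have := hf.continuous_iteratedFDeriv (m := m + 1) (by exact_mod_cast le_rfl)
      fun_prop
    have hpt : Tendsto (fun n => x n + t n z • h n • z) atTop (𝓝 x_o) := by
      have h0 : Tendsto (fun n => t n z * h n) atTop (𝓝 0) := by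
        refine squeeze_zero (fun n => mul_nonneg (ht n z).1.le (hh n).le) (fun n => ?_) hh0
        exact mul_le_of_le_one_left (hh n).le (ht n z).2.le
      have := hx.add (h0.smul_const z)
      simpa [smul_smul] using this
    have h1 := (((hcont.tendsto x_o).comp hpt).div_const ((m + 1).factorial : ℝ)).const_mul (K z * P z)
    simp only [hRe]
    have e : 1 / ((m + 1).factorial : ℝ) * (K z * P z * dirDeriv (m + 1) f x_o z) =
        K z * P z * (dirDeriv (m + 1) f x_o z / ((m + 1).factorial : ℝ)) := by ring
    rw [e]
    exact h1

/-- Flip the sign of coordinate `i`. -/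
def flipC {d : ℕ} (i : Fin d) (z : Vec d) : Vec d := fun l => (if l = i then -1 else 1) * z l

theorem flipC_mp {d : ℕ} (i : Fin d) : MeasurePreserving (flipC i) (volume : Measure (Vec d)) volume := by
  refine volume_preserving_pi (f := fun l (t : ℝ) => (if l = i then -1 else 1) * t) fun l => ?_
  by_cases h : l = i
  · simpa [h] using Measure.measurePreserving_neg (volume : Measure ℝ)
  · simp only [h, if_false, one_mul]
    exact MeasurePreserving.id (volume : Measure ℝ)

theorem flip_zero {d : ℕ} {K : Vec d → ℝ} (hKmeas : Measurable K)
    (hK1 : ∀ (ξ : Vec d), (∀ i, ξ i = 1 ∨ ξ i = -1) → ∀ (σ : Equiv.Perm (Fin d)),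
      ∀ z : Vec d, K z = K fun i => ξ i * z (σ i))
    (i : Fin d) {P : Vec d → ℝ} (hP : PG P) (hodd : ∀ z, P (flipC i z) = - P z) :
    ∫ z, K z * P z = 0 := by
  have h1 : ∫ z, K z * P z = ∫ z, K (flipC i z) * P (flipC i z) := by
    have := integral_map (μ := volume) (flipC_mp i).measurable.aemeasurable
      (f := fun z => K z * P z) (hKmeas.mul hP.1).aestronglyMeasurable
    rw [(flipC_mp i).map_eq] at this
    exact this
  have h2 : ∀ z, K (flipC i z) = K z := fun z => by
    have := hK1 (fun l => if l = i then -1 else 1) (fun l => by by_cases h : l = i <;> simp [h])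
      (Equiv.refl _) z
    rw [this]
    rfl
  simp_rw [h2, hodd, mul_neg, integral_neg] at h1
  linarith

theorem neg_zero_int {d : ℕ} {K : Vec d → ℝ}
    (hK1 : ∀ (ξ : Vec d), (∀ i, ξ i = 1 ∨ ξ i = -1) → ∀ (σ : Equiv.Perm (Fin d)),
      ∀ z : Vec d, K z = K fun i => ξ i * z (σ i))
    {P : Vec d → ℝ} (hodd : ∀ z, P (-z) = - P z) :
    ∫ z, K z * P z = 0 := by
  have h1 := integral_neg_eq_self (fun z => K z * P z) (volume : Measure (Vec d))
  have h2 : ∀ z, K (-z) = K z := fun z => by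
    have := hK1 (fun l => -1) (fun l => by simp) (Equiv.refl _) z
    rw [this]
    congr 1
    ext l
    simp
  simp_rw [h2, hodd, mul_neg, integral_neg] at h1
  linarith

theorem PG.quad {d : ℕ} (j k a b : Fin d) : PG (fun z : Vec d => z j * z k * (z a * z b)) :=
  ((PG.coord j).mul (PG.coord k)).mul ((PG.coord a).mul (PG.coord b))

theorem mom4_same {d : ℕ} {K : Vec d → ℝ} (hKmeas : Measurable K)
    (hK1 : ∀ (ξ : Vec d), (∀ i, ξ i = 1 ∨ ξ i = -1) → ∀ (σ : Equiv.Perm (Fin d)),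
      ∀ z : Vec d, K z = K fun i => ξ i * z (σ i))
    {μ4 μ22 : ℝ}
    (hμ4 : ∀ i : Fin d, μ4 = ∫ z : Vec d, K z * z i ^ 4)
    (hμ22 : ∀ i j : Fin d, i ≠ j → μ22 = ∫ z : Vec d, K z * z i ^ 2 * z j ^ 2)
    (j a b : Fin d) :
    ∫ z, K z * (z j * z j * (z a * z b)) =
      if a = b then (if j = a then μ4 else μ22) else 0 := by
  by_cases h : a = b
  · subst h
    by_cases h' : j = a
    · subst h'
      simp only [if_true]
      rw [hμ4 j]
      congr 1; ext z; ring
    · simp only [if_true, h', if_false]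
      rw [hμ22 j a h']
      congr 1; ext z; ring
  · simp only [h, if_false]
    refine flip_zero hKmeas hK1 a (PG.quad j j a b) fun z => ?_
    have hb : ¬ b = a := fun e => h e.symm
    by_cases hj : j = a <;> simp [flipC, hb, hj]

theorem mom4_diff {d : ℕ} {K : Vec d → ℝ} (hKmeas : Measurable K)
    (hK1 : ∀ (ξ : Vec d), (∀ i, ξ i = 1 ∨ ξ i = -1) → ∀ (σ : Equiv.Perm (Fin d)),
      ∀ z : Vec d, K z = K fun i => ξ i * z (σ i))
    {μ22 : ℝ}
    (hμ22 : ∀ i j : Fin d, i ≠ j → μ22 = ∫ z : Vec d, K z * z i ^ 2 * z j ^ 2)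
    (j k a b : Fin d) (hjk : j ≠ k) :
    ∫ z, K z * (z j * z k * (z a * z b)) =
      μ22 * ((if a = j ∧ b = k then 1 else 0) + (if a = k ∧ b = j then 1 else 0)) := by
  have hkj : k ≠ j := hjk.symm
  by_cases h1 : a = j ∧ b = k
  · obtain ⟨rfl, rfl⟩ := h1
    rw [if_pos ⟨rfl, rfl⟩, if_neg (fun e => hjk e.1), add_zero, mul_one]
    rw [hμ22 a b hjk]
    congr 1; ext z; ring
  by_cases h2 : a = k ∧ b = j
  · obtain ⟨rfl, rfl⟩ := h2
    rw [if_neg (fun e => hkj e.1), if_pos ⟨rfl, rfl⟩, zero_add, mul_one]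
    rw [hμ22 a b hkj]
    congr 1; ext z; ring
  simp only [h1, h2, if_false, add_zero, mul_zero]
  by_cases hj : a = j ↔ b = j
  · refine flip_zero hKmeas hK1 j (PG.quad j k a b) fun z => ?_
    by_cases hb : b = j
    · simp [flipC, hkj, hb, hj.2 hb]
    · simp [flipC, hkj, hb, mt hj.1 hb]
  · refine flip_zero hKmeas hK1 k (PG.quad j k a b) fun z => ?_
    have ha : a ≠ k := by
      rintro rfl
      apply hj
      simp only [hkj, false_iff]
      exact fun e => h2 ⟨rfl, e⟩
    have hb : b ≠ k := by
      rintro rfl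
      apply hj
      simp only [hkj, iff_false]
      exact fun e => h1 ⟨e, rfl⟩
    simp [flipC, hjk, ha, hb]

theorem Q0_lem {d : ℕ} {K : Vec d → ℝ}
    (hI : ∀ P : Vec d → ℝ, PG P → Integrable (fun z => K z * P z))
    (hK0 : (∫ z : Vec d, K z) = 1)
    (hK2 : ∀ i j : Fin d, (∫ z : Vec d, K z * z i * z j) = if i = j then 1 else 0) :
    ∫ z, K z * (euclNorm z ^ 2 - d) = 0 := by
  have e : ∀ z, K z * (euclNorm z ^ 2 - d) = (∑ i, K z * (z i * z i)) - K z * d := by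
    intro z
    rw [euclNorm_sq, mul_sub, Finset.mul_sum]
    simp_rw [pow_two]
  have hi : ∀ i : Fin d, Integrable (fun z : Vec d => K z * (z i * z i)) :=
    fun i => hI _ ((PG.coord i).mul (PG.coord i))
  simp_rw [e]
  rw [integral_sub (integrable_finsetSum _ fun i _ => hi i) (hI _ (PG.const _)),
    integral_finsetSum _ (fun i _ => hi i), integral_mul_const, hK0]
  simp_rw [← mul_assoc, hK2]
  simp

theorem Q_lem {d : ℕ} {K : Vec d → ℝ} (hKmeas : Measurable K)
    (hI : ∀ P : Vec d → ℝ, PG P → Integrable (fun z => K z * P z))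
    (hK1 : ∀ (ξ : Vec d), (∀ i, ξ i = 1 ∨ ξ i = -1) → ∀ (σ : Equiv.Perm (Fin d)),
      ∀ z : Vec d, K z = K fun i => ξ i * z (σ i))
    (hK2 : ∀ i j : Fin d, (∫ z : Vec d, K z * z i * z j) = if i = j then 1 else 0)
    {μ4 μ22 η : ℝ}
    (hμ4 : ∀ i : Fin d, μ4 = ∫ z : Vec d, K z * z i ^ 4)
    (hμ22 : ∀ i j : Fin d, i ≠ j → μ22 = ∫ z : Vec d, K z * z i ^ 2 * z j ^ 2)
    (hη : η = μ4 + (d - 1) * μ22 - d) (a b : Fin d) :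
    ∫ z, K z * ((euclNorm z ^ 2 - d) * (z a * z b)) = if a = b then η else 0 := by
  have e : ∀ z, K z * ((euclNorm z ^ 2 - d) * (z a * z b)) =
      (∑ i, K z * (z i * z i * (z a * z b))) - d * (K z * (z a * z b)) := by
    intro z
    rw [euclNorm_sq, sub_mul, mul_sub, Finset.sum_mul, Finset.mul_sum]
    simp_rw [pow_two]
    ring
  have hi : ∀ i : Fin d, Integrable (fun z : Vec d => K z * (z i * z i * (z a * z b))) :=
    fun i => hI _ (PG.quad i i a b)
  simp_rw [e]
  rw [integral_sub (integrable_finsetSum _ fun i _ => hi i)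
    ((hI _ ((PG.coord a).mul (PG.coord b))).const_mul _),
    integral_finsetSum _ (fun i _ => hi i), integral_const_mul]
  simp_rw [mom4_same hKmeas hK1 hμ4 hμ22, ← mul_assoc, hK2]
  by_cases h : a = b
  · subst h
    simp only [if_true]
    have : ∀ i : Fin d, (if i = a then μ4 else μ22) = μ22 + if i = a then μ4 - μ22 else 0 := by
      intro i; split_ifs <;> ring
    simp_rw [this, Finset.sum_add_distrib]
    simp [hη]
    ring
  · simp [h]

theorem sphere_null {d : ℕ} (hd : 1 ≤ d) :
    volume {z : Vec d | euclNorm z ^ 2 - d = 0} = 0 := by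
  have hdr : (0 : ℝ) < d := by exact_mod_cast hd
  have h := Measure.addHaar_sphere_of_ne_zero (volume : Measure (EuclideanSpace ℝ (Fin d))) 0
    (r := Real.sqrt d) (Real.sqrt_pos.2 hdr).ne'
  rw [← (PiLp.volume_preserving_toLp (Fin d)).measure_preimage
    (Metric.isClosed_sphere.measurableSet.nullMeasurableSet)] at h
  convert h using 2
  ext z
  simp only [Set.mem_ofPred_eq, Set.mem_preimage, mem_sphere_iff_norm, sub_zero,
    EuclideanSpace.norm_eq, Real.norm_eq_abs, sq_abs]
  rw [euclNorm_sq, sub_eq_zero]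
  constructor
  · intro h; rw [h]
  · intro h
    exact (Real.sqrt_inj (Finset.sum_nonneg fun i _ => sq_nonneg _) hdr.le).1 h

theorem eta_ne {d : ℕ} (hd : 1 ≤ d) {K : Vec d → ℝ} (hKpos : ∀ z, 0 ≤ K z)
    (hI : ∀ P : Vec d → ℝ, PG P → Integrable (fun z => K z * P z))
    (hK0 : (∫ z : Vec d, K z) = 1)
    (hQ0 : ∫ z, K z * (euclNorm z ^ 2 - d) = 0) {η : ℝ}
    (hQ : ∀ a b : Fin d, ∫ z, K z * ((euclNorm z ^ 2 - d) * (z a * z b)) = if a = b then η else 0) :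
    η ≠ 0 := by
  rintro rfl
  have hPG : PG (fun z : Vec d => euclNorm z ^ 2 - d) := PG.esq.sub (PG.const _)
  have hV : ∫ z, K z * ((euclNorm z ^ 2 - d) * (euclNorm z ^ 2 - d)) = 0 := by
    have e : ∀ z, K z * ((euclNorm z ^ 2 - d) * (euclNorm z ^ 2 - d)) =
        (∑ i, K z * ((euclNorm z ^ 2 - d) * (z i * z i))) - d * (K z * (euclNorm z ^ 2 - d)) := by
      intro z
      have : euclNorm z ^ 2 - d = (∑ i, z i * z i) - d := by
        rw [euclNorm_sq]; simp_rw [pow_two]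
      calc _ = K z * (euclNorm z ^ 2 - d) * ((∑ i, z i * z i) - d) := by rw [← this]; ring
        _ = _ := by rw [mul_sub, Finset.mul_sum]; simp_rw [mul_assoc]; ring
    have hi : ∀ i : Fin d, Integrable (fun z : Vec d => K z * ((euclNorm z ^ 2 - d) * (z i * z i))) :=
      fun i => hI _ (hPG.mul ((PG.coord i).mul (PG.coord i)))
    simp_rw [e]
    rw [integral_sub (integrable_finsetSum _ fun i _ => hi i) ((hI _ hPG).const_mul _),
      integral_finsetSum _ (fun i _ => hi i), integral_const_mul, hQ0]
    simp_rw [hQ]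
    simp
  rw [integral_eq_zero_iff_of_nonneg (fun z => mul_nonneg (hKpos z) (mul_self_nonneg _))
    (hI _ (hPG.mul hPG))] at hV
  have hK : K =ᵐ[volume] 0 := by
    have hn : ∀ᵐ z : Vec d, ¬ (euclNorm z ^ 2 - d = 0) := by
      rw [ae_iff]
      simpa using sphere_null hd
    filter_upwards [hV, hn] with z h1 h2
    simpa [h2] using h1
  rw [integral_congr_ae hK] at hK0
  simp at hK0

theorem dir_one {d : ℕ} (f : Vec d → ℝ) (x z : Vec d) :
    dirDeriv 1 f x z = ∑ a, z a * fderiv ℝ f x (Pi.single a 1) := by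
  unfold dirDeriv
  rw [iteratedFDeriv_one_apply]
  conv_lhs => rw [pi_eq_sum_univ' z]
  simp [map_sum]

theorem dir_two {d : ℕ} (f : Vec d → ℝ) (x z : Vec d) :
    dirDeriv 2 f x z = ∑ a, ∑ b, z a * z b *
      iteratedFDeriv ℝ 2 f x ![Pi.single a 1, Pi.single b 1] := by
  unfold dirDeriv
  rw [iteratedFDeriv_two_apply]
  conv_lhs => rw [pi_eq_sum_univ' z]
  simp only [iteratedFDeriv_two_apply, map_sum, map_smul, sum_apply,
    smul_apply, smul_eq_mul, Finset.mul_sum]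
  rw [Finset.sum_comm]
  refine Finset.sum_congr rfl fun a _ => Finset.sum_congr rfl fun b _ => ?_
  simp
  ring

theorem int_dir_one {d : ℕ} {K : Vec d → ℝ}
    (hI : ∀ P : Vec d → ℝ, PG P → Integrable (fun z => K z * P z))
    {P : Vec d → ℝ} (hP : PG P) (f : Vec d → ℝ) (x : Vec d) :
    ∫ z, K z * P z * dirDeriv 1 f x z =
      ∑ a, (∫ z, K z * (P z * z a)) * fderiv ℝ f x (Pi.single a 1) := by
  simp_rw [dir_one, Finset.mul_sum, ← integral_mul_const]
  rw [← integral_finsetSum _ fun a _ => (hI _ (hP.mul (PG.coord a))).mul_const _]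
  congr 1; ext z
  refine Finset.sum_congr rfl fun a _ => by ring

theorem int_dir_two {d : ℕ} {K : Vec d → ℝ}
    (hI : ∀ P : Vec d → ℝ, PG P → Integrable (fun z => K z * P z))
    {P : Vec d → ℝ} (hP : PG P) (f : Vec d → ℝ) (x : Vec d) :
    ∫ z, K z * P z * dirDeriv 2 f x z =
      ∑ a, ∑ b, (∫ z, K z * (P z * (z a * z b))) *
        iteratedFDeriv ℝ 2 f x ![Pi.single a 1, Pi.single b 1] := by
  simp_rw [dir_two, Finset.mul_sum, ← integral_mul_const]
  have hi : ∀ a b : Fin d, Integrable (fun z : Vec d => K z * (P z * (z a * z b)) *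
      iteratedFDeriv ℝ 2 f x ![Pi.single a 1, Pi.single b 1]) :=
    fun a b => (hI _ (hP.mul ((PG.coord a).mul (PG.coord b)))).mul_const _
  simp_rw [← integral_finsetSum _ fun b _ => hi _ b]
  rw [← integral_finsetSum _ fun a _ => integrable_finsetSum _ fun b _ => hi a b]
  congr 1; ext z
  refine Finset.sum_congr rfl fun a _ => Finset.sum_congr rfl fun b _ => by ring

theorem dir_neg {d : ℕ} (k : ℕ) (f : Vec d → ℝ) (x z : Vec d) :
    dirDeriv k f x (-z) = (-1) ^ k * dirDeriv k f x z := by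
  have := dirDeriv_smul k f x z (-1)
  simpa using this

theorem euclNorm_neg' {d : ℕ} (z : Vec d) : euclNorm (-z) = euclNorm z := by
  simp [euclNorm]

/-- bias expansions for the local moment matching estimators with
polynomials `p₀`, `p_j(z) = z_j` and `p_{jk}`. -/
theorem statement5 {d : ℕ} (hd : 1 ≤ d)
    (f : Vec d → ℝ) (hf : ContDiff ℝ (4 : ℕ∞) f)
    (hfb : ∀ n : ℕ, n ≤ 4 → ∃ C : ℝ, ∀ x : Vec d, ‖iteratedFDeriv ℝ n f x‖ ≤ C)
    (hfpos : ∀ x, 0 ≤ f x) (hfint : (∫ x : Vec d, f x) = 1)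
    (K : Vec d → ℝ) (hKmeas : Measurable K) (hKpos : ∀ z, 0 ≤ K z)
    (hKbd : ∃ C : ℝ, ∀ z, K z ≤ C)
    (hKmom : ∀ r : ℝ, 0 < r → Integrable (fun z => K z * euclNorm z ^ r))
    (hK0 : (∫ z : Vec d, K z) = 1)
    (hK1 : ∀ (ξ : Vec d), (∀ i, ξ i = 1 ∨ ξ i = -1) → ∀ (σ : Equiv.Perm (Fin d)),
      ∀ z : Vec d, K z = K fun i => ξ i * z (σ i))
    (hK2 : ∀ i j : Fin d, (∫ z : Vec d, K z * z i * z j) = if i = j then 1 else 0)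
    (μ4 μ22 η : ℝ)
    (hμ4 : ∀ i : Fin d, μ4 = ∫ z : Vec d, K z * z i ^ 4)
    (hμ22 : ∀ i j : Fin d, i ≠ j → μ22 = ∫ z : Vec d, K z * z i ^ 2 * z j ^ 2)
    (hμ22' : d = 1 → μ22 = 1)
    (hμgt : μ22 < μ4) (hμpos : 0 < μ22)
    (hη : η = μ4 + (d - 1) * μ22 - d)
    (p0 : Vec d → ℝ) (hp0 : ∀ z, p0 z = 1 - η⁻¹ * (euclNorm z ^ 2 - d))
    (pjk : Fin d → Fin d → Vec d → ℝ)
    (hpjk : ∀ j k z, pjk j k z =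
      if j = k then 2 / (μ4 - μ22) * (z j ^ 2 - 1 - (μ22 - 1) * η⁻¹ * (euclNorm z ^ 2 - d))
      else μ22⁻¹ * z j * z k)
    (x_o : Vec d) (h : ℕ → ℝ) (hh : ∀ n, 0 < h n) (hh0 : Tendsto h atTop (𝓝 0))
    (x : ℕ → Vec d) (hx : Tendsto x atTop (𝓝 x_o)) :
    -- (i)
    (Tendsto
      (fun n => ((∫ z : Vec d, K z * p0 z * f (x n + h n • z)) - f (x n)) / h n ^ 4)
      atTop (𝓝 ((1 / 24) * ∫ z : Vec d, K z * p0 z * dirDeriv 4 f x_o z))) ∧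
    -- (ii)
    (∀ j : Fin d, Tendsto
      (fun n => ((∫ z : Vec d, K z * z j * f (x n + h n • z)) -
        h n * fderiv ℝ f (x n) (Pi.single j 1)) / h n ^ 3)
      atTop (𝓝 ((1 / 6) * ∫ z : Vec d, K z * z j * dirDeriv 3 f x_o z))) ∧
    -- (iii)
    (∀ j k : Fin d, Tendsto
      (fun n => ((∫ z : Vec d, K z * pjk j k z * f (x n + h n • z)) -
        h n ^ 2 * iteratedFDeriv ℝ 2 f (x n) ![Pi.single j 1, Pi.single k 1]) / h n ^ 4)
      atTop (𝓝 ((1 / 24) * ∫ z : Vec d, K z * pjk j k z * dirDeriv 4 f x_o z))) := by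
  have hK : Integrable K := by
    by_contra hc
    rw [integral_undef hc] at hK0
    exact zero_ne_one hK0
  have hI : ∀ P : Vec d → ℝ, PG P → Integrable (fun z => K z * P z) :=
    fun P hP => hP.integrable hKmeas hKpos hK hKmom
  have hQ0 := Q0_lem hI hK0 hK2
  have hQ := Q_lem hKmeas hI hK1 hK2 hμ4 hμ22 hη
  have hη0 : η ≠ 0 := eta_ne hd hKpos hI hK0 hQ0 hQ
  have hf4 : ContDiff ℝ (3 + 1 : ℕ) f := hf
  have hf3 : ContDiff ℝ (2 + 1 : ℕ) f := hf4.of_le (by norm_cast)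
  have hf0 : ∃ C : ℝ, ∀ x : Vec d, |f x| ≤ C := by
    obtain ⟨C, hC⟩ := hfb 0 (by norm_num)
    exact ⟨C, fun x => by simpa using hC x⟩
  have hE : PG (fun z : Vec d => euclNorm z ^ 2 - d) := PG.esq.sub (PG.const _)
  have hp0' : p0 = fun z => 1 - η⁻¹ * (euclNorm z ^ 2 - d) := funext hp0
  have hPG0 : PG p0 := by
    rw [hp0']
    exact (PG.const 1).sub ((PG.const _).mul hE)
  have hPGjk : ∀ j k, PG (pjk j k) := by
    intro j k
    by_cases hjk : j = k
    · have : pjk j k = fun z => 2 / (μ4 - μ22) *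
          (z j * z j - 1 - (μ22 - 1) * η⁻¹ * (euclNorm z ^ 2 - d)) := by
        ext z
        rw [hpjk, if_pos hjk, pow_two (z j)]
      rw [this]
      exact (PG.const _).mul ((((PG.coord j).mul (PG.coord j)).sub (PG.const 1)).sub
        ((PG.const _).mul hE))
    · have : pjk j k = fun z => μ22⁻¹ * z j * z k := by
        ext z
        rw [hpjk, if_neg hjk]
      rw [this]
      exact ((PG.const _).mul (PG.coord j)).mul (PG.coord k)
  have hev0 : ∀ z, p0 (-z) = p0 z := fun z => by rw [hp0, hp0, euclNorm_neg']
  have hevjk : ∀ j k z, pjk j k (-z) = pjk j k z := fun j k z => by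
    rw [hpjk, hpjk, euclNorm_neg']
    simp
  -- zeroth-order term
  have hD0 : ∀ (P : Vec d → ℝ) (y : Vec d),
      ∫ z, K z * P z * dirDeriv 0 f y z = (∫ z, K z * P z) * f y := by
    intro P y
    rw [← integral_mul_const]
    simp [dirDeriv]
  -- parity
  have hpar : ∀ (P : Vec d → ℝ) (k : ℕ) (y : Vec d),
      (∀ z, P (-z) * (-1) ^ k = - P z) → ∫ z, K z * P z * dirDeriv k f y z = 0 := by
    intro P k y hPk
    simp_rw [mul_assoc]
    refine neg_zero_int hK1 fun z => ?_
    rw [dir_neg, ← mul_assoc, hPk]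
    ring
  -- moments of `p0`
  have hM0 : ∫ z, K z * p0 z = 1 := by
    have e : ∀ z, K z * p0 z = K z - η⁻¹ * (K z * (euclNorm z ^ 2 - d)) := fun z => by
      rw [hp0]; ring
    simp_rw [e]
    rw [integral_sub hK ((hI _ hE).const_mul _), integral_const_mul, hQ0, hK0]
    ring
  have hM2 : ∀ a b, ∫ z, K z * (p0 z * (z a * z b)) = 0 := by
    intro a b
    have hab := (PG.coord a).mul (PG.coord b)
    have e : ∀ z, K z * (p0 z * (z a * z b)) =
        K z * (z a * z b) - η⁻¹ * (K z * ((euclNorm z ^ 2 - d) * (z a * z b))) := fun z => by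
      rw [hp0]; ring
    simp_rw [e]
    rw [integral_sub (hI _ hab) ((hI _ (hE.mul hab)).const_mul _), integral_const_mul, hQ]
    simp_rw [← mul_assoc, hK2]
    split_ifs <;> simp [hη0]
  -- moments of `pjk`
  have hN0 : ∀ j k, ∫ z, K z * pjk j k z = 0 := by
    intro j k
    have hjkP := (PG.coord j).mul (PG.coord k)
    by_cases hjk : j = k
    · subst hjk
      have e : ∀ z, K z * pjk j j z = 2 / (μ4 - μ22) * ((K z * (z j * z j) - K z) -
          (μ22 - 1) * η⁻¹ * (K z * (euclNorm z ^ 2 - d))) := fun z => by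
        rw [hpjk, if_pos rfl]; ring
      simp_rw [e]
      have hs : Integrable (fun z : Vec d => K z * (z j * z j) - K z) := (hI _ hjkP).sub hK
      rw [integral_const_mul, integral_sub hs ((hI _ hE).const_mul _),
        integral_sub (hI _ hjkP) hK, integral_const_mul, hQ0, hK0]
      simp_rw [← mul_assoc, hK2]
      simp
    · have e : ∀ z, K z * pjk j k z = μ22⁻¹ * (K z * z j * z k) := fun z => by
        rw [hpjk, if_neg hjk]; ring
      simp_rw [e]
      rw [integral_const_mul, hK2, if_neg hjk, mul_zero]
  have hN2 : ∀ j k a b, ∫ z, K z * (pjk j k z * (z a * z b)) =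
      (if a = j ∧ b = k then 1 else 0) + (if a = k ∧ b = j then 1 else 0) := by
    intro j k a b
    have hab := (PG.coord a).mul (PG.coord b)
    by_cases hjk : j = k
    · subst hjk
      have hq := hI _ (PG.quad j j a b)
      have e : ∀ z, K z * (pjk j j z * (z a * z b)) =
          2 / (μ4 - μ22) * ((K z * (z j * z j * (z a * z b)) - K z * (z a * z b)) -
          (μ22 - 1) * η⁻¹ * (K z * ((euclNorm z ^ 2 - d) * (z a * z b)))) := fun z => by
        rw [hpjk, if_pos rfl]; ring
      simp_rw [e]
      have hs : Integrable (fun z : Vec d => K z * (z j * z j * (z a * z b)) - K z * (z a * z b)) :=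
        hq.sub (hI _ hab)
      rw [integral_const_mul, integral_sub hs ((hI _ (hE.mul hab)).const_mul _),
        integral_sub hq (hI _ hab), integral_const_mul, hQ,
        mom4_same hKmeas hK1 hμ4 hμ22]
      simp_rw [← mul_assoc, hK2]
      have hne : μ4 - μ22 ≠ 0 := (sub_pos.2 hμgt).ne'
      by_cases h1 : a = b
      · subst h1
        by_cases h2 : j = a
        · subst h2
          simp only [if_true, and_self]
          field_simp
          ring
        · have h3 : ¬ a = j := fun e => h2 e.symm
          simp only [if_true, h2, h3, if_false, false_and]
          field_simp
          ring
      · have h2 : ¬ (a = j ∧ b = j) := fun e => h1 (e.1.trans e.2.symm)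
        simp [h1, h2]
    · have e : ∀ z, K z * (pjk j k z * (z a * z b)) =
          μ22⁻¹ * (K z * (z j * z k * (z a * z b))) := fun z => by
        rw [hpjk, if_neg hjk]; ring
      simp_rw [e]
      rw [integral_const_mul, mom4_diff hKmeas hK1 hμ22 j k a b hjk, ← mul_assoc,
        inv_mul_cancel₀ hμpos.ne', one_mul]
  refine ⟨?_, fun j => ?_, fun j k => ?_⟩
  · have T := taylor_lim hf4 (hfb 4 le_rfl) hf0 hKmeas hI hPG0 x_o h hh hh0 x hx
    simp only [Finset.sum_range_succ, Finset.sum_range_zero, hD0, hM0,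
      hpar p0 1 _ (fun z => by rw [hev0]; ring), hpar p0 3 _ (fun z => by rw [hev0]; ring),
      int_dir_two hI hPG0, hM2] at T
    norm_num [Nat.factorial] at T
    norm_num
    exact T
  · have T := taylor_lim hf3 (hfb 3 (by norm_num)) hf0 hKmeas hI (PG.coord j) x_o h hh hh0 x hx
    have hz : ∫ z : Vec d, K z * z j = 0 := neg_zero_int hK1 fun z => by simp
    have hz1 : ∀ a : Fin d, ∫ z : Vec d, K z * (z j * z a) = if j = a then 1 else 0 := by
      intro a
      rw [← hK2]
      simp_rw [mul_assoc]
    simp only [Finset.sum_range_succ, Finset.sum_range_zero, hD0 (fun z => z j), hz,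
      hpar (fun z => z j) 2 _ (fun z => by simp), int_dir_one hI (PG.coord j), hz1] at T
    norm_num [Nat.factorial] at T
    norm_num
    exact T
  · have T := taylor_lim hf4 (hfb 4 le_rfl) hf0 hKmeas hI (hPGjk j k) x_o h hh hh0 x hx
    have hsym : ∀ y, iteratedFDeriv ℝ 2 f y ![Pi.single k 1, Pi.single j 1] =
        iteratedFDeriv ℝ 2 f y ![Pi.single j 1, Pi.single k 1] := by
      intro y
      have hs : IsSymmSndFDerivAt ℝ f y :=
        (hf4.contDiffAt).isSymmSndFDerivAt (by simp; norm_cast)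
      simp only [iteratedFDeriv_two_apply]
      exact hs _ _
    have h2 : ∀ y, ∫ z, K z * pjk j k z * dirDeriv 2 f y z =
        2 * iteratedFDeriv ℝ 2 f y ![Pi.single j 1, Pi.single k 1] := by
      intro y
      rw [int_dir_two hI (hPGjk j k)]
      simp only [hN2, add_mul, ite_mul, one_mul, zero_mul, Finset.sum_add_distrib, ite_and]
      simp [hsym]
      ring
    simp only [Finset.sum_range_succ, Finset.sum_range_zero, hD0, hN0, h2,
      hpar (pjk j k) 1 _ (fun z => by rw [hevjk]; ring),
      hpar (pjk j k) 3 _ (fun z => by rw [hevjk]; ring)] at T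
    norm_num [Nat.factorial] at T
    norm_num
    refine T.congr fun n => ?_
    ring
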